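/- arXiv:1910.05201 — 4 statements merged into one kernel-verified Lean document; each statement's English description precedes it below -/
import Mathlib

section
/- Let a, a′, b, b′ be finite types and let ρ̃ : ℤ^{a ⊔ a′} → ℤ^{b ⊔ b′} be a ℤ-linear map that carries the coordinate subgroup ℤ^a (functions supported on a) into ℤ^b. Let ρ : ℤ^a → ℤ^b be the restriction of ρ̃, and let ρ′ : ℤ^{a′} → ℤ^{b′} be the induced map on quotients, under the natural identifications ℤ^{a⊔a′}/ℤ^a ≅ ℤ^{a′} and ℤ^{b⊔b′}/ℤ^b ≅ ℤ^{b′}. If ρ′ is surjective, then the group homomorphism (ℂˣ)^b → (ℂˣ)^{b⊔b′} given by extending by the constant 1 on the b′-coordinates descends to a well-defined surjective group homomorphism 𝒢(ρ) → 𝒢(ρ̃). (This is the algebraic content of the lemma asserting that the natural homomorphism of obstruction groups 𝒢(Γ) → 𝒢(Γ̃) is onto when a vertex of the decorated dual graph Γ is expanded into a tree of ghost vertices.) -/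
open scoped BigOperators

noncomputable section

/-- The complexification `ρ_ℂ : ℂ^α → ℂ^β` of a `ℤ`-linear map `ρ : ℤ^α → ℤ^β`. -/
def cplx {α β : Type} [Fintype α] [DecidableEq α]
    (ρ : (α → ℤ) →ₗ[ℤ] (β → ℤ)) : (α → ℂ) →ₗ[ℂ] (β → ℂ) where
  toFun z := fun y => ∑ x, z x * ((ρ (Pi.single x 1)) y : ℂ)
  map_add' := by
    intro z w; funext y
    simp [add_mul, Finset.sum_add_distrib]
  map_smul' := by
    intro c z; funext y
    simp [Finset.mul_sum, mul_assoc]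

/-- The subgroup `exp_β(L(ℂ^α))` of `(ℂˣ)^β`, for a `ℂ`-linear map `L : ℂ^α → ℂ^β`. -/
def expSub {α β : Type} (L : (α → ℂ) →ₗ[ℂ] (β → ℂ)) : Subgroup (β → ℂˣ) where
  carrier := {u | ∃ z : α → ℂ, ∀ y, (u y : ℂ) = Complex.exp (L z y)}
  one_mem' := ⟨0, by simp⟩
  mul_mem' := by
    rintro u v ⟨z, hz⟩ ⟨w, hw⟩
    refine ⟨z + w, fun y => ?_⟩
    simp [hz y, hw y, map_add, Complex.exp_add]
  inv_mem' := by
    rintro u ⟨z, hz⟩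
    refine ⟨-z, fun y => ?_⟩
    simp [hz y, map_neg, Complex.exp_neg]

/-- The obstruction group `𝒢(ρ) = (ℂˣ)^β / exp_β(ρ_ℂ(ℂ^α))` of a `ℤ`-linear map
`ρ : ℤ^α → ℤ^β`. -/
abbrev ObsGroup {α β : Type} [Fintype α] [DecidableEq α]
    (ρ : (α → ℤ) →ₗ[ℤ] (β → ℤ)) : Type :=
  (β → ℂˣ) ⧸ expSub (cplx ρ)

/-- Extension by zero `ℤ^a → ℤ^{a ⊔ a'}`. -/
def extL {a a' : Type} : (a → ℤ) →ₗ[ℤ] (a ⊕ a' → ℤ) where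
  toFun f := Sum.elim f 0
  map_add' := by intro f g; funext x; cases x <;> simp
  map_smul' := by intro c f; funext x; cases x <;> simp

/-- Extension by zero `ℤ^{a'} → ℤ^{a ⊔ a'}`. -/
def extR {a a' : Type} : (a' → ℤ) →ₗ[ℤ] (a ⊕ a' → ℤ) where
  toFun f := Sum.elim 0 f
  map_add' := by intro f g; funext x; cases x <;> simp
  map_smul' := by intro c f; funext x; cases x <;> simp

/-- The restriction `ρ : ℤ^a → ℤ^b` of `ρ̃ : ℤ^{a ⊔ a'} → ℤ^{b ⊔ b'}` to the
coordinate subgroups. -/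
def resMap {a a' b b' : Type}
    (ρt : ((a ⊕ a') → ℤ) →ₗ[ℤ] ((b ⊕ b') → ℤ)) : (a → ℤ) →ₗ[ℤ] (b → ℤ) :=
  (LinearMap.funLeft ℤ ℤ Sum.inl).comp (ρt.comp extL)

/-- The map `ρ' : ℤ^{a'} → ℤ^{b'}` induced by `ρ̃` on the quotients
`ℤ^{a⊔a'}/ℤ^a ≅ ℤ^{a'}` and `ℤ^{b⊔b'}/ℤ^b ≅ ℤ^{b'}`. -/
def quotMap {a a' b b' : Type}
    (ρt : ((a ⊕ a') → ℤ) →ₗ[ℤ] ((b ⊕ b') → ℤ)) : (a' → ℤ) →ₗ[ℤ] (b' → ℤ) :=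
  (LinearMap.funLeft ℤ ℤ Sum.inr).comp (ρt.comp extR)

/-!
Since `ρ̃` carries `ℤ^a` into `ℤ^b`, it is block triangular, hence so is `ρ̃_ℂ`, with diagonal
blocks `ρ_ℂ` and `ρ'_ℂ`. The first block shows that extension by `1` maps `exp (ρ_ℂ (ℂ^a))` into
`exp (ρ̃_ℂ (ℂ^{a ⊔ a'}))`. As `ρ'_ℂ` is onto, for every `v ∈ (ℂˣ)^{b ⊔ b'}` some `ρ̃_ℂ z` is a
logarithm of `v` on the `b'`-coordinates, and `v / exp (ρ̃_ℂ z)` is an extension by `1`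
representing the class of `v`.
-/

section Complexification

variable {α β : Type} [Fintype α] [DecidableEq α]

lemma cplx_intCast (ρ : (α → ℤ) →ₗ[ℤ] (β → ℤ)) (f : α → ℤ) :
    cplx ρ (fun x => (f x : ℂ)) = fun y => (ρ f y : ℂ) := by
  funext y
  have expand : ρ f = ∑ x, f x • ρ (Pi.single x 1) := by
    simpa only [← map_smul, ← map_sum] using congrArg ρ (pi_eq_sum_univ' f)
  simp [cplx, expand]

lemma cplx_surjective [Finite β] {ρ : (α → ℤ) →ₗ[ℤ] (β → ℤ)} (hρ : Function.Surjective ρ) :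
    Function.Surjective (cplx ρ) := by
  classical
  have := Fintype.ofFinite β
  choose g hg using fun y : β => hρ (Pi.single y 1)
  intro w
  refine ⟨∑ y, w y • fun x => (g y x : ℂ), ?_⟩
  funext t
  simp [cplx_intCast, hg, Pi.single_apply]

end Complexification

section Blocks

variable {a a' b b' : Type} [DecidableEq a] [DecidableEq a']

lemma resMap_single (ρt : ((a ⊕ a') → ℤ) →ₗ[ℤ] ((b ⊕ b') → ℤ)) (x : a) (y : b) :
    resMap ρt (Pi.single x 1) y = ρt (Pi.single (Sum.inl x) 1) (Sum.inl y) :=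
  congrArg (ρt · (Sum.inl y)) (Sum.elim_single_zero x 1)

lemma quotMap_single (ρt : ((a ⊕ a') → ℤ) →ₗ[ℤ] ((b ⊕ b') → ℤ)) (x : a') (y : b') :
    quotMap ρt (Pi.single x 1) y = ρt (Pi.single (Sum.inr x) 1) (Sum.inr y) :=
  congrArg (ρt · (Sum.inr y)) (Sum.elim_zero_single x 1)

variable [Fintype a] [Fintype a']

lemma cplx_sumElim_zero_comp_inl (ρt : ((a ⊕ a') → ℤ) →ₗ[ℤ] ((b ⊕ b') → ℤ)) (z : a → ℂ) :
    cplx ρt (Sum.elim z 0) ∘ Sum.inl = cplx (resMap ρt) z := by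
  funext y
  simp [cplx, resMap_single]

variable {ρt : ((a ⊕ a') → ℤ) →ₗ[ℤ] ((b ⊕ b') → ℤ)}
  (hcarry : ∀ f : (a ⊕ a') → ℤ, (∀ x : a', f (Sum.inr x) = 0) → ∀ y : b', ρt f (Sum.inr y) = 0)

include hcarry

lemma cplx_comp_inr (z : a ⊕ a' → ℂ) :
    cplx ρt z ∘ Sum.inr = cplx (quotMap ρt) (z ∘ Sum.inr) := by
  funext y
  have lower_left_zero (x : a) : ρt (Pi.single (Sum.inl x) 1) (Sum.inr y) = 0 :=
    hcarry _ (fun x' => by simp) y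
  simp [cplx, quotMap_single, lower_left_zero]

lemma cplx_sumElim_zero (z : a → ℂ) :
    cplx ρt (Sum.elim z 0) = Sum.elim (cplx (resMap ρt) z) 0 := by
  rw [← Sum.elim_comp_inl_inr (cplx ρt (Sum.elim z 0)), cplx_sumElim_zero_comp_inl,
    cplx_comp_inr hcarry, Sum.elim_comp_inr, map_zero]

lemma cplx_comp_inr_surjective (hsurj : Function.Surjective (cplx (quotMap ρt))) :
    Function.Surjective fun z : a ⊕ a' → ℂ => cplx ρt z ∘ Sum.inr := by
  simp only [cplx_comp_inr hcarry]
  exact hsurj.comp Sum.inr_injective.surjective_comp_right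

end Blocks

section ExtensionByOne

/-- Extension by the constant `1`, as a homomorphism `M^β → M^{β ⊔ β'}`; for `M = ℂˣ` it induces
the map of obstruction groups. -/
def extOne (M β β' : Type*) [MulOneClass M] : (β → M) →* (β ⊕ β' → M) where
  toFun u := Sum.elim u 1
  map_one' := Sum.elim_one_one
  map_mul' u v := by simp [← Sum.elim_mul_mul]

variable {α α' β β' : Type}

lemma expSub_le_comap_extOne {L : (α → ℂ) →ₗ[ℂ] (β → ℂ)} {M : (α' → ℂ) →ₗ[ℂ] (β ⊕ β' → ℂ)}
    (h : ∀ z, ∃ w, M w = Sum.elim (L z) 0) :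
    expSub L ≤ (expSub M).comap (extOne ℂˣ β β') := by
  rintro u ⟨z, hz⟩
  obtain ⟨w, hw⟩ := h z
  refine ⟨w, ?_⟩
  rintro (y | y) <;> simp [extOne, hw, hz]

lemma exists_mk_extOne_eq {M : (α → ℂ) →ₗ[ℂ] (β ⊕ β' → ℂ)}
    (hM : Function.Surjective fun z => M z ∘ Sum.inr) (v : β ⊕ β' → ℂˣ) :
    ∃ u : β → ℂˣ, (extOne ℂˣ β β' u : (β ⊕ β' → ℂˣ) ⧸ expSub M) = v := by
  obtain ⟨z, hz⟩ := hM fun y => Complex.log (v (Sum.inr y))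
  have exp_inr (y : β') : Complex.exp (M z (Sum.inr y)) = v (Sum.inr y) :=
    (congrArg Complex.exp (congrFun hz y)).trans (Complex.exp_log (v (Sum.inr y)).ne_zero)
  refine ⟨fun y => v (Sum.inl y) / Units.mk0 _ (Complex.exp_ne_zero (M z (Sum.inl y))),
    QuotientGroup.eq.2 ⟨z, ?_⟩⟩
  rintro (y | y) <;> simp [extOne, exp_inr]

end ExtensionByOne

theorem obsGroup_hom_surjective_general {a a' b b' : Type}
    [Fintype a] [Fintype a'] [DecidableEq a] [DecidableEq a']
    (ρt : ((a ⊕ a') → ℤ) →ₗ[ℤ] ((b ⊕ b') → ℤ))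
    (hcarry : ∀ f : (a ⊕ a') → ℤ, (∀ x : a', f (Sum.inr x) = 0) →
        ∀ y : b', ρt f (Sum.inr y) = 0)
    (hsurj : Function.Surjective (cplx (quotMap ρt))) :
    ∃ φ : ObsGroup (resMap ρt) →* ObsGroup ρt,
      Function.Surjective φ ∧
      ∀ u : b → ℂˣ,
        φ (QuotientGroup.mk u) = QuotientGroup.mk (Sum.elim u 1) := by
  have well_defined : expSub (cplx (resMap ρt)) ≤ (expSub (cplx ρt)).comap (extOne ℂˣ b b') :=
    expSub_le_comap_extOne fun z => ⟨Sum.elim z 0, cplx_sumElim_zero hcarry z⟩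
  refine ⟨QuotientGroup.map _ _ (extOne ℂˣ b b') well_defined, fun q => ?_, fun u => rfl⟩
  obtain ⟨v, rfl⟩ := QuotientGroup.mk_surjective q
  obtain ⟨u, hu⟩ := exists_mk_extOne_eq (cplx_comp_inr_surjective hcarry hsurj) v
  exact ⟨u, hu⟩

/-- If `ρ̃ : ℤ^{a⊔a'} → ℤ^{b⊔b'}` carries the coordinate subgroup `ℤ^a` into `ℤ^b`
and the induced map `ρ'` on quotients is surjective, then the homomorphism
`(ℂˣ)^b → (ℂˣ)^{b⊔b'}` extending by the constant `1` on the `b'`-coordinates descends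
to a well-defined surjective group homomorphism `𝒢(ρ) → 𝒢(ρ̃)` of obstruction groups,
where `ρ` is the restriction of `ρ̃`.  (This is the algebraic content of the lemma that
the natural homomorphism `𝒢(Γ) → 𝒢(Γ̃)` is onto when a vertex of the decorated dual
graph is expanded into a tree of ghost vertices.) -/
theorem obsGroup_hom_surjective {a a' b b' : Type}
    [Fintype a] [Fintype a'] [Fintype b] [Fintype b']
    [DecidableEq a] [DecidableEq a']
    (ρt : ((a ⊕ a') → ℤ) →ₗ[ℤ] ((b ⊕ b') → ℤ))
    (hcarry : ∀ f : (a ⊕ a') → ℤ, (∀ x : a', f (Sum.inr x) = 0) →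
        ∀ y : b', ρt f (Sum.inr y) = 0)
    (hsurj : Function.Surjective (quotMap ρt)) :
    ∃ φ : ObsGroup (resMap ρt) →* ObsGroup ρt,
      Function.Surjective φ ∧
      ∀ u : b → ℂˣ,
        φ (QuotientGroup.mk u) = QuotientGroup.mk (Sum.elim u 1) :=
  obsGroup_hom_surjective_general ρt hcarry (cplx_surjective hsurj)
end
end

section
/- For finite index types a, b and any ℤ-linear map ρ : ℤ^a → ℤ^b, the obstruction group 𝒢(ρ) = (ℂˣ)^b / exp_b(ρ_ℂ(ℂ^a)) is isomorphic as a group to (ℂˣ)^r, where r is the rank of the finitely generated abelian group coker(ρ) = ℤ^b / ρ(ℤ^a). (This expresses the assertion that the obstruction group 𝒢(Γ) is a complex torus whose Lie algebra is coker(ρ_ℂ).) -/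
/-!
The componentwise exponential is surjective and intertwines `ρ_ℂ` with `ℂˣ ⊗ ρ`, so
`exp_b(ρ_ℂ(ℂ^a))` is the image of `ℂˣ ⊗ ρ : (ℂˣ)^a → (ℂˣ)^b`. By right exactness of the tensor
product, `𝒢(ρ) ≃ ℂˣ ⊗ coker ρ`. As `ℂˣ` is divisible, tensoring with it kills the torsion of
`coker ρ`, and what remains is `ℂˣ ⊗ ℤ^r = (ℂˣ)^r`.
-/

open scoped BigOperators TensorProduct

noncomputable section

section DivisibleTensor

variable {R : Type*} [CommRing R] (N M : Type*) [AddCommGroup N] [Module R N]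
  [DivisibleBy N R] [AddCommGroup M] [Module R M]

variable {N M} in
theorem tmul_eq_zero_of_mem_torsion [Nontrivial R] {m : M} (hm : m ∈ Submodule.torsion R M)
    (n : N) : n ⊗ₜ[R] m = 0 := by
  obtain ⟨r, hr⟩ := Submodule.mem_torsion_iff m |>.mp hm
  rw [← DivisibleBy.div_cancel n (nonZeroDivisors.coe_ne_zero r), TensorProduct.smul_tmul]
  exact (congrArg _ hr).trans (TensorProduct.tmul_zero _ _)

theorem range_lTensor_torsion_subtype [Nontrivial R] :
    LinearMap.range ((Submodule.torsion R M).subtype.lTensor N) = ⊥ := by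
  rw [LinearMap.range_eq_bot]
  ext n m
  exact tmul_eq_zero_of_mem_torsion m.2 n

/-- Tensoring with a divisible module does not see torsion. -/
def tensorQuotientTorsionEquiv [Nontrivial R] :
    N ⊗[R] M ≃ₗ[R] N ⊗[R] (M ⧸ Submodule.torsion R M) :=
  (Submodule.quotEquivOfEqBot _ (range_lTensor_torsion_subtype N M)).symm ≪≫ₗ
    lTensor.equiv N (LinearMap.exact_subtype_mkQ _) (Submodule.mkQ_surjective _)

/-- The tensor product of a divisible module `N` with a finitely generated module of rank `r` over a
principal ideal domain, identified with `N ^ r`. It depends on a choice of basis of the quotient by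
the torsion. -/
def tensorEquivFun [IsDomain R] [IsPrincipalIdealRing R] [Module.Finite R M] :
    N ⊗[R] M ≃ₗ[R] (Fin (Module.finrank R M) → N) :=
  let b := Module.finBasisOfFinrankEq R (M ⧸ Submodule.torsion R M)
    (finrank_quotient_eq_of_le_torsion le_rfl)
  tensorQuotientTorsionEquiv N M ≪≫ₗ b.equivFun.lTensor N ≪≫ₗ TensorProduct.piScalarRight R R N _

end DivisibleTensor

section ExtendCoeff

variable {R : Type*} [CommRing R] (N : Type*) [AddCommGroup N] [Module R N]
  {α β : Type*} [Fintype α] [DecidableEq α]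

/-- The linear map `N ⊗ f : N ^ α → N ^ β` with the same matrix as `f : R ^ α → R ^ β`. -/
def extendCoeff (f : (α → R) →ₗ[R] (β → R)) : (α → N) →ₗ[R] (β → N) :=
  TensorProduct.piScalarRightHom R R N β ∘ₗ f.lTensor N ∘ₗ
    (TensorProduct.piScalarRight R R N α).symm

theorem extendCoeff_apply (f : (α → R) →ₗ[R] (β → R)) (v : α → N) (y : β) :
    extendCoeff N f v y = ∑ x, f (Pi.single x 1) y • v x := by
  conv_lhs => rw [← Finset.univ_sum_single v]
  simp [extendCoeff]

theorem range_extendCoeff [Fintype β] [DecidableEq β] (f : (α → R) →ₗ[R] (β → R)) :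
    LinearMap.range (extendCoeff N f) =
      (LinearMap.range (f.lTensor N)).map (TensorProduct.piScalarRight R R N β).toLinearMap := by
  simp only [extendCoeff, LinearMap.range_comp, LinearEquiv.range, Submodule.map_top]
  rfl

/-- Right exactness of the tensor product, in coordinates. -/
def cokerExtendCoeffEquiv [Fintype β] [DecidableEq β] (f : (α → R) →ₗ[R] (β → R)) :
    ((β → N) ⧸ LinearMap.range (extendCoeff N f)) ≃ₗ[R]
      N ⊗[R] ((β → R) ⧸ LinearMap.range f) :=
  (Submodule.Quotient.equiv _ _ (TensorProduct.piScalarRight R R N β)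
      (range_extendCoeff N f).symm).symm ≪≫ₗ
    lTensor.equiv N (LinearMap.exact_map_mkQ_range f) (Submodule.mkQ_surjective _)

variable {N} in
theorem extendCoeff_comp {N' : Type*} [AddCommGroup N'] [Module R N'] (φ : N →ₗ[R] N')
    (f : (α → R) →ₗ[R] (β → R)) (v : α → N) :
    extendCoeff N' f (φ ∘ v) = φ ∘ extendCoeff N f v := by
  ext y
  simp [extendCoeff_apply]

end ExtendCoeff

section Multiplicative

variable {G : Type*} [CommGroup G] {α β γ : Type*}

/-- A `ℤ`-linear map between powers of `Additive G`, read as a homomorphism between powers of the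
multiplicative group `G`. -/
def powerHom (g : (α → Additive G) →ₗ[ℤ] (β → Additive G)) : (α → G) →* (β → G) where
  toFun u := Additive.toMul ∘ g (Additive.ofMul ∘ u)
  map_one' := congrArg (Additive.toMul ∘ ·) (map_zero g)
  map_mul' u v :=
    congrArg (Additive.toMul ∘ ·) (map_add g (Additive.ofMul ∘ u) (Additive.ofMul ∘ v))

theorem range_powerHom_eq_ker {f : (α → Additive G) →ₗ[ℤ] (β → Additive G)}
    {g : (β → Additive G) →ₗ[ℤ] (γ → Additive G)} (hfg : Function.Exact f g) :
    (powerHom f).range = (powerHom g).ker :=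
  Subgroup.ext fun u => (hfg (Additive.ofMul ∘ u)).symm

/-- The quotient of `G ^ β` by the image of `G ⊗ f : G ^ α → G ^ β`, identified with a power of the
divisible abelian group `G`. -/
def quotientPowerHomEquiv [DivisibleBy (Additive G) ℤ] [Fintype α] [DecidableEq α] [Fintype β]
    [DecidableEq β] (f : (α → ℤ) →ₗ[ℤ] (β → ℤ)) :
    (β → G) ⧸ (powerHom (extendCoeff (Additive G) f)).range ≃*
      (Fin (Module.finrank ℤ ((β → ℤ) ⧸ LinearMap.range f)) → G) :=
  let F := extendCoeff (Additive G) f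
  let e := cokerExtendCoeffEquiv (Additive G) f ≪≫ₗ tensorEquivFun _ _
  let g := e.toLinearMap ∘ₗ (LinearMap.range F).mkQ
  have exact_g : Function.Exact F g :=
    (LinearMap.exact_map_mkQ_range F).comp_injective e e.injective (map_zero e)
  have surjective_g : Function.Surjective (powerHom g) :=
    e.surjective.comp (LinearMap.range F).mkQ_surjective
  (QuotientGroup.quotientMulEquivOfEq (range_powerHom_eq_ker exact_g)).trans
    (QuotientGroup.quotientKerEquivOfSurjective _ surjective_g)

end Multiplicative

section Exponential

/-- The exponential as a `ℤ`-linear map onto the units of `ℂ`. -/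
def expUnits : ℂ →ₗ[ℤ] Additive ℂˣ :=
  (MonoidHom.toAdditiveRight Complex.expMonoidHom.toHomUnits).toIntLinearMap

theorem expUnits_surjective : Function.Surjective expUnits := fun u =>
  ⟨Complex.log u.toMul, Units.ext (Complex.exp_log u.toMul.ne_zero)⟩

instance : DivisibleBy (Additive ℂˣ) ℤ :=
  expUnits_surjective.divisibleBy expUnits fun z n => map_zsmul expUnits n z

theorem mem_expSub_iff {α β : Type} {L : (α → ℂ) →ₗ[ℂ] (β → ℂ)} {u : β → ℂˣ} :
    u ∈ expSub L ↔ ∃ z, expUnits ∘ L z = Additive.ofMul ∘ u := by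
  refine exists_congr fun z => (funext_iff.trans <| forall_congr' fun y => ?_).symm
  exact Units.ext_iff.trans eq_comm

variable {α β : Type} [Fintype α] [DecidableEq α]

theorem cplx_eq_extendCoeff (ρ : (α → ℤ) →ₗ[ℤ] (β → ℤ)) (z : α → ℂ) :
    cplx ρ z = extendCoeff ℂ ρ z := by
  ext y
  simp [cplx, extendCoeff_apply, mul_comm]

theorem expSub_cplx_eq_range (ρ : (α → ℤ) →ₗ[ℤ] (β → ℤ)) :
    expSub (cplx ρ) = (powerHom (extendCoeff (Additive ℂˣ) ρ)).range := by
  ext u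
  calc u ∈ expSub (cplx ρ)
      ↔ ∃ z : α → ℂ, extendCoeff (Additive ℂˣ) ρ (expUnits ∘ z) = Additive.ofMul ∘ u := by
        simp only [mem_expSub_iff, cplx_eq_extendCoeff, extendCoeff_comp]
    _ ↔ ∃ v : α → Additive ℂˣ, extendCoeff (Additive ℂˣ) ρ v = Additive.ofMul ∘ u :=
        (expUnits_surjective.comp_left.exists
          (p := fun v => extendCoeff (Additive ℂˣ) ρ v = Additive.ofMul ∘ u)).symm
    _ ↔ u ∈ (powerHom (extendCoeff (Additive ℂˣ) ρ)).range := Iff.rfl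

end Exponential

/-- The obstruction group `𝒢(ρ)` is a complex torus: it is isomorphic, as a group, to
`(ℂˣ)^r` where `r` is the rank of the finitely generated abelian group
`coker ρ = ℤ^b / ρ(ℤ^a)` (the dimension over `ℚ` of its rationalization
`ℚ ⊗[ℤ] coker ρ`). -/
theorem obsGroup_iso_torus {a b : Type} [Fintype a] [Fintype b] [DecidableEq a]
    (ρ : (a → ℤ) →ₗ[ℤ] (b → ℤ)) :
    Nonempty (ObsGroup ρ ≃*
      (Fin (Module.finrank ℚ (ℚ ⊗[ℤ] ((b → ℤ) ⧸ LinearMap.range ρ))) → ℂˣ)) := by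
  classical
  have finrank_eq := (TensorProduct.isBaseChange ℤ ((b → ℤ) ⧸ LinearMap.range ρ) ℚ).finrank_eq
  rw [finrank_eq]
  exact ⟨(QuotientGroup.quotientMulEquivOfEq (expSub_cplx_eq_range ρ)).trans
    (quotientPowerHomEquiv ρ)⟩
end
end

section
/- Let G be a finite tree on a nonempty vertex set V, let N ∈ ℕ, let L be a finite set of legs with an attachment map v : L → V, let s : L → ℤ^N be leg vectors, and let b : V → ℤ^N be prescribed vertex totals. Then there exists an assignment t : V × V → ℤ^N with t(u,w) = −t(w,u) for all u, w, with t(u,w) = 0 whenever u and w are not adjacent in G, and with Σ_{u∈V} t(w,u) + Σ_{l∈L, v(l)=w} s(l) = b(w) for every w ∈ V, if and only if Σ_{l∈L} s(l) = Σ_{w∈V} b(w); moreover, when it exists, such t is unique. (This is the claim that on a genus-zero dual graph there is at most one — and, when the balancing condition holds, exactly one — choice of contact-order decorations s_{e⃗} at the nodes satisfying the combinatorial matching conditions.) -/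
/-!
A decoration is an antisymmetric flow on the edges of `G` whose divergence at `w` is `c w`, namely
`b w` minus the legs at `w`. The flows crossing each edge inside a vertex set cancel, so the total
divergence over the set is the flow through its boundary. Over all of `V` this gives the balancing
condition. Removing an edge of a tree splits the vertices into two sides whose only boundary edge
is the removed one, so the flow on that edge is the total divergence of one side: this is
uniqueness. For existence, push `c a` along a path from each vertex `a` to a fixed root;
everything arriving at the root cancels because `∑ a, c a = 0`.
-/

open scoped BigOperators

/-- `t : V × V → ℤ^N` is a decoration of the tree `G` with legs `L` (attached by `vmap`,
carrying vectors `s`) and prescribed vertex totals `b` if it is antisymmetric, supported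
on adjacent pairs, and satisfies the balancing condition
`∑_u t(w,u) + ∑_{l : vmap l = w} s l = b w` at every vertex `w`. -/
def IsTreeDecoration {V L : Type} [Fintype V] [Fintype L] [DecidableEq V] {N : ℕ}
    (G : SimpleGraph V) (vmap : L → V) (s : L → Fin N → ℤ) (b : V → Fin N → ℤ)
    (t : V → V → Fin N → ℤ) : Prop :=
  (∀ u w, t u w = - t w u) ∧ (∀ u w, ¬ G.Adj u w → t u w = 0) ∧
  (∀ w, (∑ u, t w u) + ∑ l ∈ Finset.univ.filter (fun l => vmap l = w), s l = b w)

section Flow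

variable {V : Type*} {G : SimpleGraph V} {A : Type*} [AddCommGroup A] {f : V → V → A} {u w : V}

variable (G A) in
/-- The `A`-valued flows on the edges of `G`, where `f u w` is the flow from `u` to `w`: the
1-chains of `G`, encoded as antisymmetric functions on ordered pairs supported on adjacent pairs. -/
def edgeFlows : AddSubgroup (V → V → A) where
  carrier := {f | (∀ u w, f u w = -f w u) ∧ ∀ u w, ¬G.Adj u w → f u w = 0}
  zero_mem' := by simp
  add_mem' {f g} hf hg := by
    refine ⟨fun u w => ?_, fun u w huw => ?_⟩
    · simp only [Pi.add_apply, hf.1 u w, hg.1 u w, neg_add]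
    · simp only [Pi.add_apply, hf.2 u w huw, hg.2 u w huw, add_zero]
  neg_mem' {f} hf := by
    refine ⟨fun u w => ?_, fun u w huw => ?_⟩
    · simp only [Pi.neg_apply, hf.1 u w]
    · simp only [Pi.neg_apply, hf.2 u w huw, neg_zero]

theorem single_sub_single_mem_edgeFlows [DecidableEq V] (h : G.Adj u w) (c : A) :
    Pi.single u (Pi.single w c) - Pi.single w (Pi.single u c) ∈ edgeFlows G A := by
  refine ⟨fun x y => ?_, fun x y hxy => ?_⟩
  · simp only [Pi.sub_apply, Pi.single_apply, ite_apply, Pi.zero_apply, ← ite_and, neg_sub,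
      and_comm]
  · have hxy₁ : ¬(x = u ∧ y = w) := by rintro ⟨rfl, rfl⟩; exact hxy h
    have hxy₂ : ¬(x = w ∧ y = u) := by rintro ⟨rfl, rfl⟩; exact hxy h.symm
    simp only [Pi.sub_apply, Pi.single_apply, ite_apply, Pi.zero_apply, ← ite_and, hxy₁, hxy₂,
      if_false, sub_zero]

theorem sum_sum_eq_zero_of_mem_edgeFlows (hf : f ∈ edgeFlows G A) (S : Finset V) :
    ∑ x ∈ S, ∑ y ∈ S, f x y = 0 := by
  rw [← Finset.sum_product']
  -- Antisymmetry alone would not suffice: `A` may have 2-torsion, so `f x x = 0` is needed.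
  refine Finset.sum_involution (fun p _ => p.swap) (fun p _ => ?_) (fun p _ hp hswap => hp ?_)
    (fun p hp => Finset.mem_product.2 (Finset.mem_product.1 hp).symm) (fun p _ => p.swap_swap)
  · exact add_eq_zero_iff_eq_neg.2 (hf.1 p.1 p.2)
  · exact hf.2 _ _ fun hadj => hadj.ne (congrArg Prod.snd hswap)

variable [Fintype V]

/-- The divergence (net outflow) of a flow at each vertex; on `edgeFlows G A` this is, up to sign,
the boundary map from 1-chains to 0-chains. -/
def divergence : (V → V → A) →+ (V → A) where
  toFun f v := ∑ w, f v w
  map_zero' := by ext; simp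
  map_add' f g := by ext; simp [Finset.sum_add_distrib]

theorem divergence_apply (f : V → V → A) (v : V) : divergence f v = ∑ w, f v w :=
  rfl

theorem divergence_single_single [DecidableEq V] (u w : V) (c : A) :
    divergence (Pi.single u (Pi.single w c)) = Pi.single u c := by
  ext v
  obtain rfl | hv := eq_or_ne v u
  · simp [divergence_apply]
  · simp [divergence_apply, hv]

theorem sum_divergence_eq_sum_cut [DecidableEq V] (hf : f ∈ edgeFlows G A) (S : Finset V) :
    ∑ x ∈ S, divergence f x = ∑ x ∈ S, ∑ y ∈ Sᶜ, f x y := by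
  simp only [divergence_apply, ← Finset.sum_add_sum_compl S, Finset.sum_add_distrib,
    sum_sum_eq_zero_of_mem_edgeFlows hf S, zero_add]

theorem sum_divergence_eq_zero (hf : f ∈ edgeFlows G A) : ∑ x, divergence f x = 0 :=
  sum_sum_eq_zero_of_mem_edgeFlows hf Finset.univ

theorem eq_sum_divergence_of_isBridge (hf : f ∈ edgeFlows G A) (h : G.IsBridge s(u, w))
    [DecidablePred ((G.deleteEdges {s(u, w)}).Reachable u)] :
    f u w = ∑ x with (G.deleteEdges {s(u, w)}).Reachable u x, divergence f x := by
  classical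
  set S : Finset V := {x | (G.deleteEdges {s(u, w)}).Reachable u x} with hS
  have hu : u ∈ S := by simp [hS]
  have hw : w ∈ Sᶜ := by simpa [hS] using SimpleGraph.isBridge_iff.1 h
  have eq_zero : ∀ x ∈ S, ∀ y ∈ Sᶜ, ¬(x = u ∧ y = w) → f x y = 0 := by
    intro x hx y hy hne
    refine hf.2 x y fun hadj => Finset.mem_compl.1 hy ?_
    have hxy : s(x, y) ≠ s(u, w) := fun heq => by
      obtain huw | ⟨rfl, -⟩ := Sym2.eq_iff.1 heq
      · exact hne huw
      · exact Finset.mem_compl.1 hw hx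
    have hdel : (G.deleteEdges {s(u, w)}).Adj x y :=
      SimpleGraph.deleteEdges_adj.2 ⟨hadj, hxy⟩
    simpa [hS] using (Finset.mem_filter.1 hx).2.trans hdel.reachable
  symm
  calc ∑ x ∈ S, divergence f x
      = ∑ x ∈ S, ∑ y ∈ Sᶜ, f x y := sum_divergence_eq_sum_cut hf S
    _ = ∑ y ∈ Sᶜ, f u y := Finset.sum_eq_single_of_mem u hu fun x hx hxu =>
        Finset.sum_eq_zero fun y hy => eq_zero x hx y hy fun hxy => hxu hxy.1
    _ = f u w := Finset.sum_eq_single_of_mem w hw fun y hy hyw =>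
        eq_zero u hu y hy fun hxy => hyw hxy.2

theorem injOn_divergence_of_isAcyclic (hG : G.IsAcyclic) :
    Set.InjOn divergence (edgeFlows G A : Set (V → V → A)) := by
  classical
  intro f hf g hg hfg
  ext u w
  by_cases huw : G.Adj u w
  · have hbridge := SimpleGraph.isAcyclic_iff_forall_adj_isBridge.1 hG huw
    rw [eq_sum_divergence_of_isBridge hf hbridge, eq_sum_divergence_of_isBridge hg hbridge, hfg]
  · rw [hf.2 u w huw, hg.2 u w huw]

theorem single_sub_single_mem_map_divergence [DecidableEq V] (h : G.Reachable u w) (c : A) :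
    Pi.single u c - Pi.single w c ∈ (edgeFlows G A).map divergence := by
  obtain ⟨p⟩ := h
  induction p with
  | nil => simp
  | @cons u v w huv _ ih =>
    have hedge : Pi.single u c - Pi.single v c ∈ (edgeFlows G A).map divergence :=
      ⟨_, single_sub_single_mem_edgeFlows huv c, by
        rw [map_sub, divergence_single_single, divergence_single_single]⟩
    simpa only [sub_add_sub_cancel] using add_mem hedge ih

theorem mem_map_divergence_iff_sum_eq_zero (hG : G.Connected) {c : V → A} :
    c ∈ (edgeFlows G A).map divergence ↔ ∑ v, c v = 0 := by
  classical
  refine ⟨fun ⟨f, hf, hfc⟩ => hfc ▸ sum_divergence_eq_zero hf, fun hc => ?_⟩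
  obtain ⟨r⟩ := hG.nonempty
  have hroot : ∑ a, Pi.single r (c a) = (0 : V → A) := by
    simpa only [AddMonoidHom.single_apply, hc, Pi.single_zero] using
      (map_sum (AddMonoidHom.single (fun _ => A) r) c .univ).symm
  have hsum : ∑ a, (Pi.single a (c a) - Pi.single r (c a)) = c := by
    rw [Finset.sum_sub_distrib, Finset.univ_sum_single, hroot, sub_zero]
  rw [← hsum]
  exact sum_mem fun a _ => single_sub_single_mem_map_divergence (hG.preconnected a r) (c a)

end Flow

theorem isTreeDecoration_iff {V L : Type} [Fintype V] [Fintype L] [DecidableEq V] {N : ℕ}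
    {G : SimpleGraph V} {vmap : L → V} {s : L → Fin N → ℤ} {b : V → Fin N → ℤ}
    {t : V → V → Fin N → ℤ} :
    IsTreeDecoration G vmap s b t ↔
      t ∈ edgeFlows G (Fin N → ℤ) ∧ ∀ w, divergence t w + ∑ l with vmap l = w, s l = b w :=
  and_assoc.symm

theorem tree_decoration_exists_iff_and_unique_general {V L A : Type*} [Fintype V] [Fintype L]
    [DecidableEq V] [AddCommGroup A] (G : SimpleGraph V) (hG : G.IsTree)
    (vmap : L → V) (s : L → A) (b : V → A) :
    ((∃ t, t ∈ edgeFlows G A ∧ ∀ w, divergence t w + ∑ l with vmap l = w, s l = b w) ↔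
        ∑ l, s l = ∑ w, b w)
    ∧ ∀ t t', (t ∈ edgeFlows G A ∧ ∀ w, divergence t w + ∑ l with vmap l = w, s l = b w) →
        (t' ∈ edgeFlows G A ∧ ∀ w, divergence t' w + ∑ l with vmap l = w, s l = b w) →
        t = t' := by
  set c : V → A := fun w => b w - ∑ l with vmap l = w, s l with hc
  have hdiv (t : V → V → A) :
      (∀ w, divergence t w + ∑ l with vmap l = w, s l = b w) ↔ divergence t = c := by
    simp only [hc, funext_iff, eq_sub_iff_add_eq]
  have hsum : ∑ w, c w = 0 ↔ ∑ l, s l = ∑ w, b w := by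
    rw [Finset.sum_sub_distrib, Finset.sum_fiberwise, sub_eq_zero, eq_comm]
  simp only [hdiv]
  refine ⟨(mem_map_divergence_iff_sum_eq_zero hG.connected).trans hsum, ?_⟩
  rintro t t' ⟨ht, htc⟩ ⟨ht', htc'⟩
  exact injOn_divergence_of_isAcyclic hG.isAcyclic ht ht' (htc.trans htc'.symm)

/-- On a finite tree with legs, a decoration with prescribed vertex totals exists if and
only if the total balancing condition `∑_l s l = ∑_w b w` holds; moreover such a
decoration is unique when it exists.  (This is the claim that on a genus-zero dual graph
there is at most one — and, when the balancing condition holds, exactly one — choice of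
contact-order decorations `s_{e⃗}` at the nodes satisfying the combinatorial matching
conditions.) -/
theorem tree_decoration_exists_iff_and_unique {V L : Type} [Fintype V] [Fintype L]
    [DecidableEq V] {N : ℕ} (G : SimpleGraph V) (hG : G.IsTree)
    (vmap : L → V) (s : L → Fin N → ℤ) (b : V → Fin N → ℤ) :
    ((∃ t : V → V → Fin N → ℤ, IsTreeDecoration G vmap s b t) ↔
        ∑ l, s l = ∑ w, b w)
    ∧ ∀ t t' : V → V → Fin N → ℤ,
        IsTreeDecoration G vmap s b t → IsTreeDecoration G vmap s b t' → t = t' := by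
  simpa only [isTreeDecoration_iff] using
    tree_decoration_exists_iff_and_unique_general G hG vmap s b
end

section
/- Let Γ be a finite connected multigraph given by darts: a finite type E⃗ with a fixed-point-free involution e ↦ ē, a nonempty finite vertex set V, and a source map v₁ : E⃗ → V with target v₂(e) := v₁(ē), such that any two vertices are joined by a finite path of darts. Let N ∈ ℕ, s : V → ℤ^N, t : E⃗ → ℤ^N with t(ē) = −t(e), and λ : E⃗ → ℚ with λ(e) > 0 and λ(ē) = λ(e), and suppose: (i) for every dart e, s(v₂(e)) − s(v₁(e)) = λ(e)·t(e) in ℚ^N; and (ii) for every vertex v, Σ_{e : v₁(e)=v} t(e) = 0 in ℤ^N. Then s is constant on V and t(e) = 0 for every dart e. (This is the claim, proved by a maximum-principle argument, that for a degree-zero stable log map of arbitrary genus only the trivial node decorations satisfy the tropical matching condition and the per-vertex balancing condition.) -/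
open scoped BigOperators

/-!
Argue one coordinate at a time. At a vertex where a coordinate of `s` is maximal, no outgoing slope
in that coordinate is positive; since the outgoing slopes sum to zero, they all vanish, so every
out-neighbour is again a maximum. By connectedness the coordinate is constant, and therefore all
slopes vanish.
-/

namespace DartGraph

variable {D V α G : Type*} [LinearOrder α] [LinearOrder G] {src tgt : D → V} {f : V → α}
  {t : D → G}

/-- The slope `t e` of each dart has the sign of the increment of the potential `f` along `e`.
This is one coordinate of the tropical matching condition, with the edge lengths forgotten; the
comparison by `cmp` allows `f` and `t` to take values in different ordered types. -/
def HasSlopeSigns [Zero G] (src tgt : D → V) (f : V → α) (t : D → G) : Prop :=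
  ∀ e, cmp (f (tgt e)) (f (src e)) = cmp (t e) 0

theorem hasSlopeSigns_of_sub_eq_mul {K : Type*} [Ring K] [LinearOrder K] [IsStrictOrderedRing K]
    {f : V → K} {t lam : D → K} (hlam : ∀ e, 0 < lam e)
    (h : ∀ e, f (tgt e) - f (src e) = lam e * t e) : HasSlopeSigns src tgt f t := fun e ↦
  calc cmp (f (tgt e)) (f (src e))
    _ = cmp (lam e * t e) (lam e * 0) := by rw [← cmp_sub_zero, h, mul_zero]
    _ = cmp (t e) 0 := cmp_mul_pos_left (hlam e) _ _

namespace HasSlopeSigns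

theorem of_strictMono_comp {β H : Type*} [LinearOrder β] [LinearOrder H] [Zero G] [Zero H]
    {φ : α → β} {ψ : G → H} (hφ : StrictMono φ) (hψ : StrictMono ψ) (hψ_zero : ψ 0 = 0)
    (h : HasSlopeSigns src tgt (φ ∘ f) (ψ ∘ t)) : HasSlopeSigns src tgt f t := fun e ↦
  calc cmp (f (tgt e)) (f (src e))
    _ = cmp (φ (f (tgt e))) (φ (f (src e))) := (hφ.cmp_map_eq _ _).symm
    _ = cmp (ψ (t e)) (ψ 0) := (h e).trans (by rw [hψ_zero, Function.comp_apply])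
    _ = cmp (t e) 0 := hψ.cmp_map_eq _ _

theorem slope_nonpos_iff [Zero G] (h : HasSlopeSigns src tgt f t) (e : D) :
    t e ≤ 0 ↔ f (tgt e) ≤ f (src e) :=
  (le_iff_le_of_cmp_eq_cmp (h e)).symm

theorem slope_eq_zero_iff [Zero G] (h : HasSlopeSigns src tgt f t) (e : D) :
    t e = 0 ↔ f (tgt e) = f (src e) :=
  (eq_iff_eq_of_cmp_eq_cmp (h e)).symm

variable [AddCommMonoid G] [IsOrderedAddMonoid G] [Fintype D] [DecidableEq V]

theorem slope_eq_zero_of_forall_le (h : HasSlopeSigns src tgt f t) {v : V}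
    (hbal : ∑ e with src e = v, t e = 0) (hmax : ∀ e, src e = v → f (tgt e) ≤ f v)
    {e : D} (he : src e = v) : t e = 0 := by
  have hnonpos : ∀ e ∈ Finset.univ.filter (src · = v), t e ≤ 0 := fun e he ↦ by
    obtain rfl := (Finset.mem_filter_univ e).mp he
    exact (h.slope_nonpos_iff e).mpr (hmax e rfl)
  exact (Finset.sum_eq_zero_iff_of_nonpos hnonpos).mp hbal e ((Finset.mem_filter_univ e).mpr he)

theorem apply_eq_of_reflTransGen_of_forall_le (h : HasSlopeSigns src tgt f t)
    (hbal : ∀ v, ∑ e with src e = v, t e = 0) {m u : V} (hmax : ∀ v, f v ≤ f m)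
    (hmu : Relation.ReflTransGen (fun x y ↦ ∃ e, src e = x ∧ tgt e = y) m u) : f u = f m := by
  induction hmu with
  | refl => rfl
  | tail _ hstep ih =>
    obtain ⟨e, rfl, rfl⟩ := hstep
    have hzero : t e = 0 :=
      h.slope_eq_zero_of_forall_le (hbal _) (fun e' _ ↦ ih ▸ hmax (tgt e')) rfl
    exact ((h.slope_eq_zero_iff e).mp hzero).trans ih

theorem apply_eq_apply [Finite V] (h : HasSlopeSigns src tgt f t)
    (hconn : ∀ u w, Relation.ReflTransGen (fun x y ↦ ∃ e, src e = x ∧ tgt e = y) u w)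
    (hbal : ∀ v, ∑ e with src e = v, t e = 0) (u w : V) : f u = f w := by
  have : Nonempty V := ⟨u⟩
  obtain ⟨m, hmax⟩ := Finite.exists_max f
  have heq_max (v : V) : f v = f m :=
    h.apply_eq_of_reflTransGen_of_forall_le hbal hmax (hconn m v)
  exact (heq_max u).trans (heq_max w).symm

end HasSlopeSigns

end DartGraph

open DartGraph in
theorem degree_zero_log_trivial_decorations_general {D V ι α G : Type*} [Fintype D] [Finite V]
    [DecidableEq V] [LinearOrder α] [AddCommMonoid G] [LinearOrder G] [IsOrderedAddMonoid G]
    {src tgt : D → V}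
    (hconn : ∀ u w, Relation.ReflTransGen (fun x y ↦ ∃ e, src e = x ∧ tgt e = y) u w)
    {s : V → ι → α} {t : D → ι → G} (hmatch : ∀ i, HasSlopeSigns src tgt (s · i) (t · i))
    (hbal : ∀ v, ∑ e with src e = v, t e = 0) :
    (∀ u w, s u = s w) ∧ ∀ e, t e = 0 := by
  have hbal_apply (i : ι) (v : V) : ∑ e with src e = v, t e i = 0 := by
    simpa only [Finset.sum_apply, Pi.zero_apply] using congrFun (hbal v) i
  have hconst (u w : V) : s u = s w :=
    funext fun i ↦ (hmatch i).apply_eq_apply hconn (hbal_apply i) u w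
  refine ⟨hconst, fun e ↦ funext fun i ↦ ?_⟩
  exact ((hmatch i).slope_eq_zero_iff e).mpr (congrFun (hconst (tgt e) (src e)) i)

/-- Maximum-principle claim for degree-zero stable log maps of arbitrary genus: on a
finite connected multigraph given by darts (a finite type `D` with fixed-point-free
involution `inv` and source map `v₁`, the target of `e` being `v₁ (inv e)`), if
`s : V → ℤ^N`, `t : D → ℤ^N` with `t(ē) = -t(e)`, and positive symmetric edge lengths
`lam : D → ℚ` satisfy the tropical matching condition
`s(v₂ e) - s(v₁ e) = lam e · t e` (in `ℚ^N`) for every dart, together with the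
per-vertex balancing condition `∑_{e : v₁ e = v} t e = 0` in `ℤ^N`, then `s` is
constant and all `t e` vanish. -/
theorem degree_zero_log_trivial_decorations {D V : Type} [Fintype D] [Fintype V]
    [DecidableEq V] [Nonempty V]
    (inv : D → D) (hinv : ∀ e, inv (inv e) = e) (hfp : ∀ e, inv e ≠ e)
    (v₁ : D → V)
    (hconn : ∀ u w : V,
      Relation.ReflTransGen (fun x y => ∃ e, v₁ e = x ∧ v₁ (inv e) = y) u w)
    (N : ℕ) (s : V → Fin N → ℤ) (t : D → Fin N → ℤ) (lam : D → ℚ)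
    (ht : ∀ e, t (inv e) = - t e)
    (hlam_pos : ∀ e, 0 < lam e) (hlam_inv : ∀ e, lam (inv e) = lam e)
    (hmatch : ∀ e i, (s (v₁ (inv e)) i : ℚ) - (s (v₁ e) i : ℚ) = lam e * (t e i : ℚ))
    (hbal : ∀ v, ∑ e ∈ Finset.univ.filter (fun e => v₁ e = v), t e = 0) :
    (∀ u w, s u = s w) ∧ ∀ e, t e = 0 := by
  exact degree_zero_log_trivial_decorations_general hconn (fun i ↦ .of_strictMono_comp
    Int.cast_strictMono Int.cast_strictMono Int.cast_zero
    (DartGraph.hasSlopeSigns_of_sub_eq_mul hlam_pos (hmatch · i))) hbal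
end
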